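/- Let n ≥ 1, C > 0, and let K ⊆ ℝⁿ be a convex body with 0 ∈ K and K ⊆ C√n·B_n. Let σ_i > 0, let σ_{i+1}² = σ_i²·(1 + σ_i²/(C²n)), and let f_i(x) = exp(−‖x‖²/(2σ_i²)), f_{i+1}(x) = exp(−‖x‖²/(2σ_{i+1}²)). Let Q_i and Q_{i+1} be the probability measures on K with densities proportional to f_i and f_{i+1} respectively. Then for every measurable S ⊆ K, Q_i(S) ≤ √e · Q_{i+1}(S); i.e., the warmness M(Q_i, Q_{i+1}) = sup_{S ⊆ K} Q_i(S)/Q_{i+1}(S) is at most √e. -/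

import Mathlib

open MeasureTheory

/-! Passing from variance `v` to `w ≥ v` can only increase the weight `exp (-‖x‖² / (2v))`, and on
the ball of radius `R` it does so by a factor of at most `exp (R² / 2 * (1 / v - 1 / w))`. Hence the
mass of `S` does not decrease and the normalizing constant grows by at most this factor. At the
accelerated rate `w = v * (1 + v / R²)` the exponent equals `R² / (2 * (R² + v)) ≤ 1 / 2`. -/

section Warmness

variable {α : Type*} [MeasurableSpace α] {μ : Measure α}

theorem setIntegral_div_setIntegral_le_mul {f g : α → ℝ} {c : ℝ} {S K : Set α}
    (hS : MeasurableSet S) (hK : MeasurableSet K) (hSK : S ⊆ K)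
    (hf : IntegrableOn f K μ) (hg : IntegrableOn g K μ) (hf_nonneg : ∀ x ∈ K, 0 ≤ f x)
    (hfg : ∀ x ∈ K, f x ≤ g x) (hgf : ∀ x ∈ K, g x ≤ c * f x) (hpos : 0 < ∫ x in K, f x ∂μ) :
    (∫ x in S, f x ∂μ) / (∫ x in K, f x ∂μ) ≤
      c * ((∫ x in S, g x ∂μ) / (∫ x in K, g x ∂μ)) := by
  have hnum : ∫ x in S, f x ∂μ ≤ ∫ x in S, g x ∂μ :=
    setIntegral_mono_on (hf.mono_set hSK) (hg.mono_set hSK) hS fun x hx => hfg x (hSK hx)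
  have hden : ∫ x in K, g x ∂μ ≤ c * ∫ x in K, f x ∂μ := by
    rw [← integral_const_mul]
    exact setIntegral_mono_on hg (hf.const_mul c) hK hgf
  have hg_pos : 0 < ∫ x in K, g x ∂μ := hpos.trans_le (setIntegral_mono_on hf hg hK hfg)
  have hgS_nonneg : 0 ≤ ∫ x in S, g x ∂μ :=
    (setIntegral_nonneg hS fun x hx => hf_nonneg x (hSK hx)).trans hnum
  rw [← mul_div_assoc, div_le_div_iff₀ hpos hg_pos]
  calc (∫ x in S, f x ∂μ) * ∫ x in K, g x ∂μ
      ≤ (∫ x in S, g x ∂μ) * (c * ∫ x in K, f x ∂μ) := by gcongr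
    _ = c * (∫ x in S, g x ∂μ) * ∫ x in K, f x ∂μ := by ring

end Warmness

section GaussianWeight

variable {E : Type*} [SeminormedAddCommGroup E]

/-- The unnormalized density of the centred isotropic Gaussian, parametrized by its variance `v`
rather than by the standard deviation; these are the phases of the cooling schedule. -/
noncomputable def gaussianWeight (v : ℝ) (x : E) : ℝ :=
  Real.exp (-‖x‖ ^ 2 / (2 * v))

theorem gaussianWeight_pos (v : ℝ) (x : E) : 0 < gaussianWeight v x :=
  Real.exp_pos _

theorem gaussianWeight_le_one {v : ℝ} (hv : 0 ≤ v) (x : E) : gaussianWeight v x ≤ 1 :=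
  Real.exp_le_one_iff.mpr <|
    div_nonpos_of_nonpos_of_nonneg (neg_nonpos.mpr (sq_nonneg _)) (by positivity)

theorem continuous_gaussianWeight (v : ℝ) : Continuous (gaussianWeight v : E → ℝ) := by
  unfold gaussianWeight
  fun_prop

theorem gaussianWeight_le_gaussianWeight {v w : ℝ} (hv : 0 < v) (hvw : v ≤ w) (x : E) :
    gaussianWeight v x ≤ gaussianWeight w x := by
  unfold gaussianWeight
  rw [Real.exp_le_exp, neg_div, neg_div, neg_le_neg_iff]
  gcongr

theorem gaussianWeight_le_exp_mul_gaussianWeight {v w R : ℝ} (hv : 0 < v) (hvw : v ≤ w) {x : E}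
    (hx : ‖x‖ ≤ R) :
    gaussianWeight w x ≤ Real.exp (R ^ 2 / 2 * (v⁻¹ - w⁻¹)) * gaussianWeight v x := by
  have hinv : 0 ≤ v⁻¹ - w⁻¹ := sub_nonneg.mpr (inv_anti₀ hv hvw)
  unfold gaussianWeight
  rw [← Real.exp_add, Real.exp_le_exp]
  calc -‖x‖ ^ 2 / (2 * w) = ‖x‖ ^ 2 / 2 * (v⁻¹ - w⁻¹) + -‖x‖ ^ 2 / (2 * v) := by ring
    _ ≤ R ^ 2 / 2 * (v⁻¹ - w⁻¹) + -‖x‖ ^ 2 / (2 * v) := by gcongr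

variable [MeasurableSpace E] [OpensMeasurableSpace E] {μ : Measure E} {S K : Set E} {R v w : ℝ}

theorem integrableOn_gaussianWeight (hv : 0 ≤ v) (hK : μ K ≠ ⊤) :
    IntegrableOn (gaussianWeight v) K μ :=
  Measure.integrableOn_of_bounded hK (continuous_gaussianWeight v).measurable.aestronglyMeasurable
    (M := 1) <| ae_of_all _ fun x => by
      rw [Real.norm_of_nonneg (gaussianWeight_pos v x).le]
      exact gaussianWeight_le_one hv x

theorem setIntegral_gaussianWeight_pos (hv : 0 ≤ v) (hK_ne_zero : μ K ≠ 0) (hK_ne_top : μ K ≠ ⊤) :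
    0 < ∫ x in K, gaussianWeight v x ∂μ :=
  have : NeZero (μ.restrict K) := ⟨Measure.restrict_eq_zero.not.mpr hK_ne_zero⟩
  integral_exp_pos (integrableOn_gaussianWeight hv hK_ne_top)

theorem setIntegral_gaussianWeight_div_le_exp_mul (hv : 0 < v) (hvw : v ≤ w)
    (hS : MeasurableSet S) (hK : MeasurableSet K) (hSK : S ⊆ K)
    (hKR : K ⊆ Metric.closedBall 0 R) (hK_ne_zero : μ K ≠ 0) (hK_ne_top : μ K ≠ ⊤) :
    (∫ x in S, gaussianWeight v x ∂μ) / (∫ x in K, gaussianWeight v x ∂μ) ≤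
      Real.exp (R ^ 2 / 2 * (v⁻¹ - w⁻¹)) *
        ((∫ x in S, gaussianWeight w x ∂μ) / (∫ x in K, gaussianWeight w x ∂μ)) :=
  setIntegral_div_setIntegral_le_mul hS hK hSK
    (integrableOn_gaussianWeight hv.le hK_ne_top)
    (integrableOn_gaussianWeight (hv.le.trans hvw) hK_ne_top)
    (fun x _ => (gaussianWeight_pos v x).le)
    (fun x _ => gaussianWeight_le_gaussianWeight hv hvw x)
    (fun _ hx => gaussianWeight_le_exp_mul_gaussianWeight hv hvw
      (mem_closedBall_zero_iff.mp (hKR hx)))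
    (setIntegral_gaussianWeight_pos hv.le hK_ne_zero hK_ne_top)

theorem accelerated_rate_exponent_le_half (hR : 0 < R) (hv : 0 < v) :
    R ^ 2 / 2 * (v⁻¹ - (v * (1 + v / R ^ 2))⁻¹) ≤ 1 / 2 := by
  have hexponent : R ^ 2 / 2 * (v⁻¹ - (v * (1 + v / R ^ 2))⁻¹) = R ^ 2 / (R ^ 2 + v) / 2 := by
    field_simp
    ring
  have hratio : R ^ 2 / (R ^ 2 + v) ≤ 1 :=
    div_le_one_of_le₀ (le_add_of_nonneg_right hv.le) (by positivity)
  rw [hexponent]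
  gcongr

theorem warm_start_accelerated_rate_general (hR : 0 < R) (hv : 0 < v)
    (hS : MeasurableSet S) (hK : MeasurableSet K) (hSK : S ⊆ K)
    (hKR : K ⊆ Metric.closedBall 0 R) (hK_ne_zero : μ K ≠ 0) (hK_ne_top : μ K ≠ ⊤) :
    (∫ x in S, gaussianWeight v x ∂μ) / (∫ x in K, gaussianWeight v x ∂μ) ≤
      Real.sqrt (Real.exp 1) *
        ((∫ x in S, gaussianWeight (v * (1 + v / R ^ 2)) x ∂μ) /
          (∫ x in K, gaussianWeight (v * (1 + v / R ^ 2)) x ∂μ)) := by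
  have hvw : v ≤ v * (1 + v / R ^ 2) :=
    le_mul_of_one_le_right hv.le (le_add_of_nonneg_right (by positivity))
  have hmass (T : Set E) : 0 ≤ ∫ x in T, gaussianWeight (v * (1 + v / R ^ 2)) x ∂μ :=
    integral_nonneg fun x => (gaussianWeight_pos _ x).le
  refine (setIntegral_gaussianWeight_div_le_exp_mul hv hvw hS hK hSK hKR hK_ne_zero
    hK_ne_top).trans (mul_le_mul_of_nonneg_right ?_ (div_nonneg (hmass S) (hmass K)))
  rw [← Real.exp_half]
  exact Real.exp_le_exp.mpr (accelerated_rate_exponent_le_half hR hv)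

end GaussianWeight

/-- Warm start at the accelerated cooling rate: for a convex body `K` with
`0 ∈ K ⊆ C√n·B_n` and `σ_{i+1}² = σ_i²(1 + σ_i²/(C²n))`, the distributions
`Q_i, Q_{i+1}` on `K` with densities proportional to `exp(-‖x‖²/(2σ_i²))`,
`exp(-‖x‖²/(2σ_{i+1}²))` satisfy `Q_i(S) ≤ √e · Q_{i+1}(S)` for every
measurable `S ⊆ K`. -/
theorem warm_start_accelerated_rate
    (n : ℕ) (hn : 1 ≤ n) (C : ℝ) (hC : 0 < C)
    (K : Set (EuclideanSpace ℝ (Fin n)))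
    (hKconv : Convex ℝ K) (hKcomp : IsCompact K) (hKint : (interior K).Nonempty)
    (h0K : (0 : EuclideanSpace ℝ (Fin n)) ∈ K)
    (hKsub : K ⊆ Metric.closedBall 0 (C * Real.sqrt n))
    (σ : ℝ) (hσ : 0 < σ)
    (S : Set (EuclideanSpace ℝ (Fin n))) (hS : MeasurableSet S) (hSK : S ⊆ K) :
    (∫ x in S, Real.exp (-‖x‖ ^ 2 / (2 * σ ^ 2))) /
      (∫ x in K, Real.exp (-‖x‖ ^ 2 / (2 * σ ^ 2))) ≤
    Real.sqrt (Real.exp 1) *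
      ((∫ x in S, Real.exp (-‖x‖ ^ 2 / (2 * (σ ^ 2 * (1 + σ ^ 2 / (C ^ 2 * n)))))) /
        (∫ x in K, Real.exp (-‖x‖ ^ 2 / (2 * (σ ^ 2 * (1 + σ ^ 2 / (C ^ 2 * n))))))) := by
  have hR : 0 < C * Real.sqrt n := mul_pos hC (Real.sqrt_pos.mpr (by exact_mod_cast hn))
  have hR_sq : (C * Real.sqrt n) ^ 2 = C ^ 2 * n := by rw [mul_pow, Real.sq_sqrt n.cast_nonneg]
  simpa only [gaussianWeight, hR_sq] using
    warm_start_accelerated_rate_general hR (pow_pos hσ 2) hS hKcomp.measurableSet hSK hKsub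
      (Measure.measure_pos_of_nonempty_interior volume hKint).ne' hKcomp.measure_ne_top
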